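/- arXiv:2110.03225 — 10 statements merged into one kernel-verified Lean document; each statement's English description precedes it below -/
import Mathlib

section
/- Let G be a connected finite simple graph that is not regular. If there exists a constant c > 0 such that d(u)^2 + d(v)^2 = c for every edge uv of G, then G is bi-regular, i.e., G is bipartite with partite sets A and B such that every vertex in A has the same degree and every vertex in B has the same degree (and these two degrees are distinct). -/
open Finset

theorem walk_prop {V : Type*} (G : SimpleGraph V) (P : V → Prop)
    (h : ∀ u v, G.Adj u v → P u → P v) {x y : V} (p : G.Walk x y) : P x → P y := by
  induction p with
  | nil => exact id
  | cons hadj _ ih => exact fun hx => ih (h _ _ hadj hx)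

/-- If a connected non-regular graph has `d(u)^2 + d(v)^2` equal to a positive constant `c`
over all edges `uv`, then it is bi-regular: bipartite with partite sets `A` and `B` such that
all vertices of `A` have a common degree, all vertices of `B` have a common degree, and these
two degrees are distinct. -/
theorem biregular_of_constant_sq_degree_sum {V : Type*} [Fintype V] [DecidableEq V]
    (G : SimpleGraph V) [DecidableRel G.Adj]
    (hconn : G.Connected)
    (hnonreg : ¬ ∃ k : ℕ, ∀ v : V, G.degree v = k)
    (c : ℕ) (hc : 0 < c)
    (hconst : ∀ u v : V, G.Adj u v → G.degree u ^ 2 + G.degree v ^ 2 = c) :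
    ∃ (A B : Set V) (a b : ℕ),
      (∀ v : V, v ∈ A ∨ v ∈ B) ∧
      (∀ v : V, ¬ (v ∈ A ∧ v ∈ B)) ∧
      (∀ u v : V, G.Adj u v → (u ∈ A ∧ v ∈ B) ∨ (u ∈ B ∧ v ∈ A)) ∧
      (∀ v ∈ A, G.degree v = a) ∧
      (∀ v ∈ B, G.degree v = b) ∧
      a ≠ b := by
  have key : ∃ x y, G.Adj x y ∧ G.degree x ≠ G.degree y := by
    by_contra! hcon
    obtain ⟨r⟩ := hconn.nonempty
    refine hnonreg ⟨G.degree r, fun v => ?_⟩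
    obtain ⟨p⟩ := hconn.preconnected r v
    exact walk_prop G (fun w => G.degree w = G.degree r)
      (fun u w huw hu => (hcon u w huw).symm.trans hu) p rfl
  obtain ⟨x, y, hxy, hne⟩ := key
  have hc1 := hconst x y hxy
  have step : ∀ u v, G.Adj u v →
      (G.degree u = G.degree x → G.degree v = G.degree y) ∧
      (G.degree u = G.degree y → G.degree v = G.degree x) := by
    intro u v huv
    have h2 := hconst u v huv
    constructor
    · intro h
      rw [h] at h2
      exact Nat.pow_left_injective (n := 2) (by norm_num) (by simp only; omega)
    · intro h
      rw [h] at h2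
      exact Nat.pow_left_injective (n := 2) (by norm_num) (by simp only; omega)
  have all : ∀ v, G.degree v = G.degree x ∨ G.degree v = G.degree y := by
    intro v
    obtain ⟨p⟩ := hconn.preconnected x v
    exact walk_prop G (fun w => G.degree w = G.degree x ∨ G.degree w = G.degree y)
      (fun u w huw hu => hu.elim (fun h => Or.inr ((step u w huw).1 h))
        (fun h => Or.inl ((step u w huw).2 h))) p (Or.inl rfl)
  refine ⟨{v | G.degree v = G.degree x}, {v | G.degree v = G.degree y}, G.degree x, G.degree y,
    all, fun v hv => hne (hv.1.symm.trans hv.2), fun u v huv => ?_, fun v hv => hv,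
    fun v hv => hv, hne⟩
  rcases all u with h | h
  · exact Or.inl ⟨h, (step u v huv).1 h⟩
  · exact Or.inr ⟨h, (step u v huv).2 h⟩
end

section
/- Let G be a finite simple graph with m ≥ 1 edges and let α be a real number with 0 < α < 1. Then SO_α(G) ≤ m^{1-α/2} · F(G)^{α/2}. -/
open Finset

variable {V : Type*}

/-- The general Sombor index `SO_α(G) = ∑_{uv ∈ E(G)} (d(u)^2 + d(v)^2)^(α/2)`. -/
noncomputable def generalSombor [Fintype V] [DecidableEq V] (G : SimpleGraph V)
    [DecidableRel G.Adj] (α : ℝ) : ℝ :=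
  ∑ e ∈ G.edgeFinset,
    Sym2.lift ⟨fun u v => ((G.degree u : ℝ) ^ 2 + (G.degree v : ℝ) ^ 2) ^ (α / 2),
      fun u v => by dsimp only; rw [add_comm]⟩ e

/-- The forgotten index `F(G) = ∑_{uv ∈ E(G)} (d(u)^2 + d(v)^2)`. -/
noncomputable def forgottenIndex [Fintype V] [DecidableEq V] (G : SimpleGraph V)
    [DecidableRel G.Adj] : ℝ :=
  ∑ e ∈ G.edgeFinset,
    Sym2.lift ⟨fun u v => ((G.degree u : ℝ) ^ 2 + (G.degree v : ℝ) ^ 2),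
      fun u v => by dsimp only; rw [add_comm]⟩ e

theorem sum_rpow_le_aux {ι : Type*} (s : Finset ι) (f : ι → ℝ) (hf : ∀ i, 0 ≤ f i)
    (hs : 1 ≤ s.card) (p : ℝ) (h0 : 0 ≤ p) (h1 : p ≤ 1) :
    ∑ i ∈ s, f i ^ p ≤ (s.card : ℝ) ^ (1 - p) * (∑ i ∈ s, f i) ^ p := by
  have hc : (0 : ℝ) < s.card := by exact_mod_cast hs
  have h := (Real.concaveOn_rpow h0 h1).le_map_sum (t := s) (w := fun _ => (s.card : ℝ)⁻¹)
    (p := f) (fun _ _ => by positivity) (by simp [hc.ne']) (fun i _ => hf i)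
  simp only [smul_eq_mul, ← Finset.mul_sum] at h
  rw [Real.mul_rpow (by positivity) (Finset.sum_nonneg fun i _ => hf i),
    Real.inv_rpow hc.le, inv_mul_le_iff₀ hc] at h
  rw [Real.rpow_sub hc, Real.rpow_one, div_eq_mul_inv, mul_assoc]
  exact h

theorem generalSombor_le_of_mem_Ioo [Fintype V] [DecidableEq V]
    (G : SimpleGraph V) [DecidableRel G.Adj]
    (hm : 1 ≤ G.edgeFinset.card) (α : ℝ) (hα : 0 < α ∧ α < 1) :
    generalSombor G α ≤
      (G.edgeFinset.card : ℝ) ^ (1 - α / 2) * forgottenIndex G ^ (α / 2) := by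
  have h := sum_rpow_le_aux G.edgeFinset
    (Sym2.lift ⟨fun u v => ((G.degree u : ℝ) ^ 2 + (G.degree v : ℝ) ^ 2),
      fun u v => by dsimp only; rw [add_comm]⟩)
    (fun e => by induction e with | _ u v => simp only [Sym2.lift_mk]; positivity)
    hm (α / 2) (by linarith [hα.1]) (by linarith [hα.2])
  refine le_trans (le_of_eq ?_) h
  unfold generalSombor
  refine Finset.sum_congr rfl fun e _ => ?_
  induction e with | _ u v => simp only [Sym2.lift_mk]
end

section
/- Let G be a finite simple graph on n ≥ 2 vertices and let α be a real number with 0 < α < 1. Then SO_α(G) ≥ F(G)^{α/2}, with equality if and only if G has at most one edge (i.e., G is the disjoint union of K_2 with n−2 isolated vertices, or G is the empty graph on n vertices). -/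
open Finset

variable {V : Type*}

theorem sombor_aux_strict {ι : Type*} (s : Finset ι) (f : ι → ℝ) (p : ℝ) (hp1 : p < 1)
    (hf : ∀ e ∈ s, 0 < f e) (hs : 1 < s.card) :
    (∑ e ∈ s, f e) ^ p < ∑ e ∈ s, f e ^ p := by
  have hne : s.Nonempty := Finset.card_pos.mp (by omega)
  have hS : 0 < ∑ e ∈ s, f e := Finset.sum_pos hf hne
  have key : ∀ x : ℝ, 0 < x → x ^ p = x * x ^ (p - 1) := by
    intro x hx
    rw [Real.rpow_sub_one hx.ne']
    field_simp
  rw [key _ hS, Finset.sum_mul]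
  refine Finset.sum_lt_sum_of_nonempty hne fun e he => ?_
  rw [key _ (hf e he)]
  refine mul_lt_mul_of_pos_left ?_ (hf e he)
  refine Real.rpow_lt_rpow_of_neg (hf e he) ?_ (by linarith)
  obtain ⟨b, hb, hbe⟩ := Finset.exists_mem_ne hs e
  exact Finset.single_lt_sum hbe he hb (hf b hb) fun k hk _ => (hf k hk).le

theorem generalSombor_ge_forgotten_rpow [Fintype V] [DecidableEq V]
    (G : SimpleGraph V) [DecidableRel G.Adj]
    (hn : 2 ≤ Fintype.card V) (α : ℝ) (hα : 0 < α ∧ α < 1) :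
    forgottenIndex G ^ (α / 2) ≤ generalSombor G α ∧
      (generalSombor G α = forgottenIndex G ^ (α / 2) ↔ G.edgeFinset.card ≤ 1) := by
  obtain ⟨h0, h1⟩ := hα
  let f : Sym2 V → ℝ :=
    Sym2.lift ⟨fun u v => ((G.degree u : ℝ) ^ 2 + (G.degree v : ℝ) ^ 2),
      fun u v => by dsimp only; rw [add_comm]⟩
  have hF : forgottenIndex G = ∑ e ∈ G.edgeFinset, f e := rfl
  have hSO : generalSombor G α = ∑ e ∈ G.edgeFinset, f e ^ (α / 2) := by
    unfold generalSombor
    refine Finset.sum_congr rfl fun e _ => ?_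
    induction e using Sym2.ind with
    | _ u v => rfl
  have hf : ∀ e ∈ G.edgeFinset, 0 < f e := by
    intro e he
    induction e using Sym2.ind with
    | _ u v =>
      have hadj : G.Adj u v := by simpa using he
      have hd : 0 < G.degree u := (G.degree_pos_iff_exists_adj u).2 ⟨v, hadj⟩
      have hd' : (0 : ℝ) < G.degree u := by exact_mod_cast hd
      change (0 : ℝ) < (G.degree u : ℝ) ^ 2 + (G.degree v : ℝ) ^ 2
      positivity
  rw [hF, hSO]
  by_cases hc : G.edgeFinset.card ≤ 1
  · have heq : ∑ e ∈ G.edgeFinset, f e ^ (α / 2) = (∑ e ∈ G.edgeFinset, f e) ^ (α / 2) := by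
      rcases Nat.le_one_iff_eq_zero_or_eq_one.mp hc with h | h
      · rw [Finset.card_eq_zero.mp h, Finset.sum_empty, Finset.sum_empty,
          Real.zero_rpow (by positivity)]
      · obtain ⟨a, ha⟩ := Finset.card_eq_one.mp h
        rw [ha, Finset.sum_singleton, Finset.sum_singleton]
    exact ⟨heq.ge, fun _ => hc, fun _ => heq⟩
  · have hlt := sombor_aux_strict G.edgeFinset f (α / 2) (by linarith) hf (by omega)
    exact ⟨hlt.le, fun h => absurd h hlt.ne', fun h => absurd h hc⟩
end

section
/- Let G be a finite simple graph on n ≥ 2 vertices and let α be a real number with α < 0. Then SO_α(G) ≤ 2^{-1+α/2} · n · (n−1), with equality if and only if G is the complete graph K_2 on two vertices. -/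
open Finset

variable {V : Type*}

theorem generalSombor_le_of_neg [Fintype V] [DecidableEq V]
    (G : SimpleGraph V) [DecidableRel G.Adj]
    (hn : 2 ≤ Fintype.card V) (α : ℝ) (hα : α < 0) :
    generalSombor G α ≤
        (2 : ℝ) ^ (-1 + α / 2) * (Fintype.card V : ℝ) * ((Fintype.card V : ℝ) - 1) ∧
      (generalSombor G α =
          (2 : ℝ) ^ (-1 + α / 2) * (Fintype.card V : ℝ) * ((Fintype.card V : ℝ) - 1) ↔
        Fintype.card V = 2 ∧ G = ⊤) := by
  have hc : (0 : ℝ) < (2 : ℝ) ^ (α / 2) := by positivity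
  have hR : (2 : ℝ) ^ (-1 + α / 2) * (Fintype.card V : ℝ) * ((Fintype.card V : ℝ) - 1)
      = ((Fintype.card V).choose 2 : ℝ) * (2 : ℝ) ^ (α / 2) := by
    rw [Real.rpow_add (by norm_num), Nat.cast_choose_two, Real.rpow_neg_one]
    ring
  rw [hR]
  have hterm : ∀ e ∈ G.edgeFinset,
      Sym2.lift ⟨fun u v => ((G.degree u : ℝ) ^ 2 + (G.degree v : ℝ) ^ 2) ^ (α / 2),
        fun u v => by dsimp only; rw [add_comm]⟩ e ≤ (2 : ℝ) ^ (α / 2) := by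
    intro e
    induction e using Sym2.ind with
    | _ u v =>
      intro he
      rw [SimpleGraph.mem_edgeFinset, SimpleGraph.mem_edgeSet] at he
      have hu : (1 : ℝ) ≤ G.degree u := by
        exact_mod_cast (G.degree_pos_iff_exists_adj u).2 ⟨v, he⟩
      have hv : (1 : ℝ) ≤ G.degree v := by
        exact_mod_cast (G.degree_pos_iff_exists_adj v).2 ⟨u, he.symm⟩
      simp only [Sym2.lift_mk]
      exact Real.rpow_le_rpow_of_nonpos (by norm_num) (by nlinarith) (by linarith)
  have hsum : generalSombor G α ≤ ∑ _e ∈ G.edgeFinset, (2 : ℝ) ^ (α / 2) :=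
    Finset.sum_le_sum hterm
  have hconst : ∑ _e ∈ G.edgeFinset, (2 : ℝ) ^ (α / 2)
      = (#G.edgeFinset : ℝ) * (2 : ℝ) ^ (α / 2) := by simp
  have hcard : #G.edgeFinset ≤ (Fintype.card V).choose 2 :=
    G.card_edgeFinset_le_card_choose_two
  have hcard' : (#G.edgeFinset : ℝ) ≤ ((Fintype.card V).choose 2 : ℝ) := by
    exact_mod_cast hcard
  have hle2 := mul_le_mul_of_nonneg_right hcard' hc.le
  refine ⟨by linarith, ?_, ?_⟩
  · intro h
    have h1 : (#G.edgeFinset : ℝ) * (2 : ℝ) ^ (α / 2)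
        = ((Fintype.card V).choose 2 : ℝ) * (2 : ℝ) ^ (α / 2) := by linarith
    have h2 : #G.edgeFinset = (Fintype.card V).choose 2 := by
      exact_mod_cast mul_right_cancel₀ hc.ne' h1
    have hG : G = ⊤ := by
      have h3 : G.edgeFinset = (⊤ : SimpleGraph V).edgeFinset := by
        apply Finset.eq_of_subset_of_card_le
        · exact SimpleGraph.edgeFinset_mono le_top
        · rw [SimpleGraph.card_edgeFinset_top_eq_card_choose_two, h2]
      exact SimpleGraph.edgeFinset_inj.1 h3
    refine ⟨?_, hG⟩
    have h4 : generalSombor G α = ∑ _e ∈ G.edgeFinset, (2 : ℝ) ^ (α / 2) := by linarith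
    have h5 := (Finset.sum_eq_sum_iff_of_le hterm).1 h4
    obtain ⟨u, v, huv⟩ := Fintype.exists_pair_of_one_lt_card (α := V) (by omega)
    have hadj : ∀ w x, w ≠ x → G.Adj w x := by
      intro w x hwx; rw [hG]; exact hwx
    have h6 := h5 s(u, v) (by
      rw [SimpleGraph.mem_edgeFinset, SimpleGraph.mem_edgeSet]; exact hadj u v huv)
    simp only [Sym2.lift_mk] at h6
    have hdeg : ∀ w, G.degree w = Fintype.card V - 1 := by
      subst hG
      intro w
      convert SimpleGraph.complete_graph_degree w
    rw [hdeg, hdeg] at h6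
    by_contra hne
    have h7 : (2 : ℝ) ≤ ((Fintype.card V - 1 : ℕ) : ℝ) := by
      have : 2 ≤ Fintype.card V - 1 := by omega
      exact_mod_cast this
    exact (Real.rpow_lt_rpow_of_neg (z := α / 2) (x := 2) (by norm_num)
      (show (2:ℝ) < ((Fintype.card V - 1 : ℕ) : ℝ) ^ 2 + ((Fintype.card V - 1 : ℕ) : ℝ) ^ 2
        by nlinarith) (by linarith)).ne h6
  · rintro ⟨h2, hG⟩
    have hdeg : ∀ w, G.degree w = 1 := by
      subst hG
      intro w
      have := SimpleGraph.complete_graph_degree w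
      rw [h2] at this
      convert this
    have hE : #G.edgeFinset = (Fintype.card V).choose 2 := by
      subst hG
      convert SimpleGraph.card_edgeFinset_top_eq_card_choose_two (V := V)
    rw [← hE, ← hconst]
    refine Finset.sum_congr rfl ?_
    intro e _
    induction e using Sym2.ind with
    | _ u v =>
      simp only [Sym2.lift_mk, hdeg]
      norm_num
end

section
/- Let G be a finite simple graph on n ≥ 2 vertices and let α be a real number with α > 0. Then SO_α(G) + SO_α(G̅) ≤ 2^{-1+α/2} · n · (n−1)^{α+1}, with equality if and only if G is the complete graph K_n or the empty graph on n vertices. -/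
open Finset

variable {V : Type*}

theorem deg_full [Fintype V] [DecidableEq V] (H : SimpleGraph V) [DecidableRel H.Adj] (u : V) :
    H.degree u = Fintype.card V - 1 ↔ ∀ w, w ≠ u → H.Adj u w := by
  have h1 := H.degree_compl (v := u)
  have h2 := H.degree_lt_card_verts u
  have h3 : Hᶜ.degree u = 0 ↔ ∀ w, ¬ Hᶜ.Adj u w := by
    have h5 := Hᶜ.degree_pos_iff_exists_adj (v := u)
    rw [← not_exists, ← h5]
    omega
  have h4 : H.degree u = Fintype.card V - 1 ↔ Hᶜ.degree u = 0 := by omega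
  rw [h4, h3]
  refine forall_congr' fun w => ?_
  rw [SimpleGraph.compl_adj]
  constructor
  · intro h hw
    by_contra hc
    exact h ⟨hw.symm, hc⟩
  · rintro h ⟨hne, hc⟩
    exact hc (h hne.symm)

theorem edge_term_bound {m a b α : ℝ} (ha : 0 ≤ a) (hb : 0 ≤ b) (ham : a ≤ m) (hbm : b ≤ m)
    (hα : 0 < α) :
    (a ^ 2 + b ^ 2) ^ (α / 2) ≤ (m ^ 2 + m ^ 2) ^ (α / 2) ∧
    ((a ^ 2 + b ^ 2) ^ (α / 2) = (m ^ 2 + m ^ 2) ^ (α / 2) ↔ a = m ∧ b = m) := by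
  have h1 : a ^ 2 ≤ m ^ 2 := by gcongr
  have h2 : b ^ 2 ≤ m ^ 2 := by gcongr
  refine ⟨Real.rpow_le_rpow (by positivity) (by linarith) (by linarith), ?_⟩
  rw [Real.rpow_left_inj (by positivity) (by positivity) (by linarith)]
  constructor
  · intro h
    have h3 : a ^ 2 = m ^ 2 := by linarith
    have h4 : b ^ 2 = m ^ 2 := by linarith
    have hm : 0 ≤ m := ha.trans ham
    exact ⟨(pow_left_inj₀ ha hm (by norm_num)).1 h3, (pow_left_inj₀ hb hm (by norm_num)).1 h4⟩
  · rintro ⟨rfl, rfl⟩; rfl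

theorem sombor_bound [Fintype V] [DecidableEq V] (H : SimpleGraph V) [DecidableRel H.Adj]
    (hn : 2 ≤ Fintype.card V) (α : ℝ) (hα : 0 < α) :
    generalSombor H α ≤ (#H.edgeFinset : ℝ) *
      ((((Fintype.card V : ℝ) - 1) ^ 2 + ((Fintype.card V : ℝ) - 1) ^ 2) ^ (α / 2)) ∧
    (generalSombor H α = (#H.edgeFinset : ℝ) *
      ((((Fintype.card V : ℝ) - 1) ^ 2 + ((Fintype.card V : ℝ) - 1) ^ 2) ^ (α / 2)) ↔
      ∀ u v, H.Adj u v → ∀ w, w ≠ u → H.Adj u w) := by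
  set M : ℝ := (((Fintype.card V : ℝ) - 1) ^ 2 + ((Fintype.card V : ℝ) - 1) ^ 2) ^ (α / 2) with hM
  have hd : ∀ u, (H.degree u : ℝ) ≤ (Fintype.card V : ℝ) - 1 := by
    intro u
    have : H.degree u + 1 ≤ Fintype.card V := H.degree_lt_card_verts u
    have : (H.degree u : ℝ) + 1 ≤ Fintype.card V := by exact_mod_cast this
    linarith
  have he : ∀ u, (H.degree u : ℝ) = (Fintype.card V : ℝ) - 1 ↔ ∀ w, w ≠ u → H.Adj u w := by
    intro u
    rw [← deg_full, ← Nat.cast_inj (R := ℝ), Nat.cast_sub (by omega)]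
    simp
  have hb := fun u v => edge_term_bound (Nat.cast_nonneg (H.degree u))
    (Nat.cast_nonneg (H.degree v)) (hd u) (hd v) hα
  have hs : (#H.edgeFinset : ℝ) * M = ∑ e ∈ H.edgeFinset, M := by simp
  rw [hs]
  unfold generalSombor
  have hle : ∀ e ∈ H.edgeFinset, Sym2.lift ⟨fun u v => ((H.degree u : ℝ) ^ 2 +
      (H.degree v : ℝ) ^ 2) ^ (α / 2), fun u v => by dsimp only; rw [add_comm]⟩ e ≤ M := by
    intro e _
    induction e using Sym2.ind with
    | _ u v => exact (hb u v).1
  refine ⟨Finset.sum_le_sum hle, ?_⟩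
  rw [Finset.sum_eq_sum_iff_of_le hle]
  constructor
  · intro h u v huv
    have := h s(u, v) (by simpa using huv)
    exact (he u).1 ((hb u v).2.1 this).1
  · intro h e hmem
    induction e using Sym2.ind with
    | _ u v =>
      have huv : H.Adj u v := by simpa using hmem
      exact (hb u v).2.2 ⟨(he u).2 (h u v huv), (he v).2 (h v u huv.symm)⟩

theorem edge_count [Fintype V] [DecidableEq V] (G : SimpleGraph V) [DecidableRel G.Adj]
    (hn : 2 ≤ Fintype.card V) :
    2 * ((#G.edgeFinset : ℝ) + #Gᶜ.edgeFinset) = Fintype.card V * ((Fintype.card V : ℝ) - 1) := by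
  have h1 := G.sum_degrees_eq_twice_card_edges
  have h2 := Gᶜ.sum_degrees_eq_twice_card_edges
  have h3 : ∑ v, G.degree v + ∑ v, Gᶜ.degree v = Fintype.card V * (Fintype.card V - 1) := by
    rw [← Finset.sum_add_distrib, Finset.sum_congr rfl (g := fun _ => Fintype.card V - 1)]
    · simp
    · intro v _
      have := G.degree_compl (v := v)
      have := G.degree_lt_card_verts v
      omega
  rw [h1, h2] at h3
  have h4 : ((2 * #G.edgeFinset + 2 * #Gᶜ.edgeFinset : ℕ) : ℝ)
    = ((Fintype.card V * (Fintype.card V - 1) : ℕ) : ℝ) := by rw [h3]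
  rw [Nat.cast_mul, Nat.cast_sub (by omega)] at h4
  push_cast at h4
  linarith

theorem nordhaus_gaddum_upper_of_pos [Fintype V] [DecidableEq V]
    (G : SimpleGraph V) [DecidableRel G.Adj]
    (hn : 2 ≤ Fintype.card V) (α : ℝ) (hα : 0 < α) :
    generalSombor G α + generalSombor Gᶜ α ≤
        (2 : ℝ) ^ (-1 + α / 2) * (Fintype.card V : ℝ) * ((Fintype.card V : ℝ) - 1) ^ (α + 1) ∧
      (generalSombor G α + generalSombor Gᶜ α =
          (2 : ℝ) ^ (-1 + α / 2) * (Fintype.card V : ℝ) * ((Fintype.card V : ℝ) - 1) ^ (α + 1) ↔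
        G = ⊤ ∨ G = ⊥) := by
  have hn' : (2 : ℝ) ≤ Fintype.card V := by exact_mod_cast hn
  obtain ⟨a1, a2⟩ := sombor_bound G hn α hα
  obtain ⟨b1, b2⟩ := sombor_bound Gᶜ hn α hα
  have hc := edge_count G hn
  set m : ℝ := (Fintype.card V : ℝ) - 1 with hm
  have hm0 : 0 < m := by linarith
  set M : ℝ := (m ^ 2 + m ^ 2) ^ (α / 2) with hM
  have hMv : M = 2 ^ (α / 2) * m ^ α := by
    rw [hM, ← two_mul, Real.mul_rpow (by norm_num) (by positivity), ← Real.rpow_natCast,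
      ← Real.rpow_mul hm0.le]
    congr 2
    push_cast
    ring
  have hR : (2 : ℝ) ^ (-1 + α / 2) * (Fintype.card V : ℝ) * m ^ (α + 1) =
      #G.edgeFinset * M + #Gᶜ.edgeFinset * M := by
    rw [Real.rpow_add (by norm_num), Real.rpow_add hm0, Real.rpow_one, Real.rpow_neg_one, hMv]
    linear_combination (-(2 : ℝ) ^ (α / 2) * m ^ α / 2) * hc
  rw [hR]
  refine ⟨add_le_add a1 b1, ?_⟩
  rw [add_eq_add_iff_eq_and_eq a1 b1, a2, b2]
  constructor
  · rintro ⟨h1, h2⟩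
    by_contra! hcon
    obtain ⟨ht, hbot⟩ := hcon
    obtain ⟨u, v, huv⟩ := SimpleGraph.ne_bot_iff_exists_adj.1 hbot
    have ht' : Gᶜ ≠ ⊥ := by simpa using ht
    obtain ⟨x, y, hxy⟩ := SimpleGraph.ne_bot_iff_exists_adj.1 ht'
    have hxu : x ≠ u := by
      rintro rfl
      have := h1 x v huv y hxy.ne'
      exact ((SimpleGraph.compl_adj _ _ _).1 hxy).2 this
    have p := h1 u v huv x hxu
    have q := h2 x y hxy u hxu.symm
    exact ((SimpleGraph.compl_adj _ _ _).1 q).2 p.symm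
  · rintro (rfl | rfl)
    · refine ⟨fun u v _ w hw => by simpa using hw.symm, fun u v h => ?_⟩
      simp at h
    · refine ⟨fun u v h => by simp at h, fun u v _ w hw => by simpa using hw.symm⟩
end

section
/- Let G be a finite simple graph on n ≥ 2 vertices and let α be a real number with α ≥ 1. Then SO_α(G) + SO_α(G̅) ≥ n·(n−1)^{1+α} / 2^{1+α}. -/
open Finset

variable {V : Type*}

theorem sombor_aux [Fintype V] [DecidableEq V] (G : SimpleGraph V) [DecidableRel G.Adj]
    (g : V → ℝ) :
    ∑ e ∈ G.edgeFinset, (∑ v, if v ∈ e then g v else 0) = ∑ v, (G.degree v : ℝ) * g v := by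
  rw [Finset.sum_comm]
  refine Finset.sum_congr rfl fun v _ => ?_
  rw [← Finset.sum_filter, ← G.incidenceFinset_eq_filter, Finset.sum_const,
    G.card_incidenceFinset_eq_degree, nsmul_eq_mul]

theorem sombor_tangent (c α x y : ℝ) (hc : 0 < c) (hα : 1 ≤ α) (hx : 0 ≤ x) (hy : 0 ≤ y) :
    (c ^ α * (1 - α) + α * c ^ α / c * x) / 2 + (c ^ α * (1 - α) + α * c ^ α / c * y) / 2
      ≤ (x ^ 2 + y ^ 2) ^ (α / 2) := by
  have h1 : ((x + y) / 2) ^ α ≤ (x ^ 2 + y ^ 2) ^ (α / 2) := by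
    have : ((x + y) / 2) ^ α = (((x + y) / 2) ^ 2) ^ (α / 2) := by
      rw [← Real.rpow_natCast, ← Real.rpow_mul (by positivity)]
      congr 1; push_cast; ring
    rw [this]
    apply Real.rpow_le_rpow (by positivity) _ (by positivity)
    nlinarith [sq_nonneg (x - y), sq_nonneg (x + y)]
  have h2 := one_add_mul_self_le_rpow_one_add (s := (x + y) / 2 / c - 1)
    (by have : 0 ≤ (x + y) / 2 / c := by positivity
        linarith) hα
  have h3 : 1 + ((x + y) / 2 / c - 1) = (x + y) / 2 / c := by ring
  rw [h3, Real.div_rpow (by positivity) hc.le, le_div_iff₀ (by positivity)] at h2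
  refine le_trans (le_of_eq ?_) (h2.trans h1)
  field_simp
  ring

theorem sombor_lower [Fintype V] [DecidableEq V] (G : SimpleGraph V) [DecidableRel G.Adj]
    (c α : ℝ) (hc : 0 < c) (hα : 1 ≤ α) :
    ∑ v, (G.degree v : ℝ) * ((c ^ α * (1 - α) + α * c ^ α / c * G.degree v) / 2)
      ≤ generalSombor G α := by
  rw [← sombor_aux G (fun v => (c ^ α * (1 - α) + α * c ^ α / c * G.degree v) / 2)]
  unfold generalSombor
  refine Finset.sum_le_sum fun e he => ?_
  induction e using Sym2.ind with
  | _ u w =>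
    have hne : u ≠ w := by
      rw [SimpleGraph.mem_edgeFinset, SimpleGraph.mem_edgeSet] at he
      exact he.ne
    have hs : (univ.filter fun v => v ∈ s(u, w)) = {u, w} := by
      ext v; simp
    rw [← Finset.sum_filter, hs, Finset.sum_pair hne]
    exact sombor_tangent c α _ _ hc hα (by positivity) (by positivity)

theorem nordhaus_gaddum_lower_of_one_le [Fintype V] [DecidableEq V]
    (G : SimpleGraph V) [DecidableRel G.Adj]
    (hn : 2 ≤ Fintype.card V) (α : ℝ) (hα : 1 ≤ α) :
    generalSombor G α + generalSombor Gᶜ α ≥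
      (Fintype.card V : ℝ) * ((Fintype.card V : ℝ) - 1) ^ (1 + α) / (2 : ℝ) ^ (1 + α) := by
  have hn' : (2 : ℝ) ≤ Fintype.card V := by exact_mod_cast hn
  obtain ⟨c, hcd⟩ : ∃ c : ℝ, c = ((Fintype.card V : ℝ) - 1) / 2 := ⟨_, rfl⟩
  have hc : 0 < c := by rw [hcd]; linarith
  have h1 := sombor_lower G c α hc hα
  have h2 := sombor_lower Gᶜ c α hc hα
  have hR : (Fintype.card V : ℝ) * ((Fintype.card V : ℝ) - 1) ^ (1 + α) / (2 : ℝ) ^ (1 + α)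
      = ∑ _v : V, c * c ^ α := by
    rw [Finset.sum_const, nsmul_eq_mul, Finset.card_univ, mul_div_assoc,
      ← Real.div_rpow (by linarith) (by norm_num), ← hcd, Real.rpow_add hc, Real.rpow_one]
  rw [hR]
  refine ge_iff_le.2 (le_trans ?_ (add_le_add h1 h2))
  rw [← Finset.sum_add_distrib]
  refine Finset.sum_le_sum fun v _ => ?_
  have hd : (Gᶜ.degree v : ℝ) = 2 * c - G.degree v := by
    have h := G.degree_compl v
    have hlt := G.degree_lt_card_verts v
    have : Gᶜ.degree v + G.degree v + 1 = Fintype.card V := by omega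
    have : (Gᶜ.degree v : ℝ) + G.degree v + 1 = Fintype.card V := by exact_mod_cast this
    rw [hcd]; linarith
  rw [hd]
  have hK : 0 < c ^ α := by positivity
  have hp : 0 ≤ α * c ^ α / c * ((G.degree v : ℝ) - c) ^ 2 := by positivity
  have hB : α * c ^ α / c * c = α * c ^ α := by field_simp
  generalize α * c ^ α / c = B at *
  generalize (G.degree v : ℝ) = d at *
  have : c * c ^ α + B * (d - c) ^ 2 = d * ((c ^ α * (1 - α) + B * d) / 2) + (2 * c - d) * ((c ^ α * (1 - α) + B * (2 * c - d)) / 2) := by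
    linear_combination (-c) * hB
  linarith
end

section
/- Let G be a finite simple graph on n ≥ 2 vertices and let α be a real number with 0 < α < 1. Then SO_α(G) + SO_α(G̅) ≥ n^{α/2} · (n−1)^{3α/2} / 2^{3α/2}. -/
open Finset

variable {V : Type*}

theorem aux_rpow_sum {ι : Type*} (s : Finset ι) (f : ι → ℝ) (hf : ∀ i ∈ s, 0 ≤ f i) (p : ℝ)
    (hp : 0 < p) (hp1 : p ≤ 1) : (∑ i ∈ s, f i) ^ p ≤ ∑ i ∈ s, f i ^ p := by
  classical
  induction s using Finset.induction_on with
  | empty => simp [Real.zero_rpow hp.ne']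
  | insert a s ha ih =>
    rw [Finset.sum_insert ha, Finset.sum_insert ha]
    have h1 := ih (fun i hi => hf i (Finset.mem_insert_of_mem hi))
    have h2 := Real.rpow_add_le_add_rpow (hf a (Finset.mem_insert_self _ _))
      (Finset.sum_nonneg (fun i hi => hf i (Finset.mem_insert_of_mem hi))) hp.le hp1
    linarith

theorem aux_sum_edges [Fintype V] [DecidableEq V] (G : SimpleGraph V)
    [DecidableRel G.Adj] (f : V → ℝ) :
    ∑ e ∈ G.edgeFinset, Sym2.lift ⟨fun u v => f u + f v, fun u v => add_comm _ _⟩ e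
      = ∑ v, (G.degree v : ℝ) * f v := by
  have h : ∀ e ∈ G.edgeFinset, Sym2.lift ⟨fun u v => f u + f v, fun u v => add_comm _ _⟩ e
      = ∑ w : V, if w ∈ e then f w else 0 := by
    intro e he
    induction e using Sym2.ind with
    | _ u v =>
      have huv : u ≠ v := by
        have : G.Adj u v := by simpa using he
        exact this.ne
      rw [← Finset.sum_filter]
      have : (Finset.univ.filter (fun w => w ∈ s(u, v))) = {u, v} := by
        ext w; simp
      rw [this, Finset.sum_pair huv]
      rfl
  rw [Finset.sum_congr rfl h, Finset.sum_comm]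
  refine Finset.sum_congr rfl fun v _ => ?_
  rw [← Finset.sum_filter, Finset.sum_const, nsmul_eq_mul, ← G.incidenceFinset_eq_filter,
    G.card_incidenceFinset_eq_degree]

theorem aux_lower [Fintype V] [DecidableEq V] (G : SimpleGraph V)
    [DecidableRel G.Adj] (α : ℝ) (hα : 0 < α ∧ α < 1) :
    (∑ v, (G.degree v : ℝ) * (G.degree v : ℝ) ^ 2) ^ (α / 2) ≤ generalSombor G α := by
  rw [← aux_sum_edges G (fun v => (G.degree v : ℝ) ^ 2)]
  refine (aux_rpow_sum _ _ ?_ _ (by linarith [hα.1]) (by linarith [hα.2])).trans (le_of_eq ?_)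
  · intro e _
    induction e using Sym2.ind with
    | _ u v => simp only [Sym2.lift_mk]; positivity
  · unfold generalSombor
    refine Finset.sum_congr rfl fun e _ => ?_
    induction e using Sym2.ind with
    | _ u v => simp only [Sym2.lift_mk]

theorem nordhaus_gaddum_lower_of_mem_Ioo [Fintype V] [DecidableEq V]
    (G : SimpleGraph V) [DecidableRel G.Adj]
    (hn : 2 ≤ Fintype.card V) (α : ℝ) (hα : 0 < α ∧ α < 1) :
    generalSombor G α + generalSombor Gᶜ α ≥
      (Fintype.card V : ℝ) ^ (α / 2) * ((Fintype.card V : ℝ) - 1) ^ (3 * α / 2) /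
        (2 : ℝ) ^ (3 * α / 2) := by
  have hn' : (2 : ℝ) ≤ Fintype.card V := by exact_mod_cast hn
  have h1 := aux_lower G α hα
  have h2 := aux_lower Gᶜ α hα
  have h3 := Real.rpow_add_le_add_rpow
    (Finset.sum_nonneg (s := Finset.univ)
      (f := fun v => (G.degree v : ℝ) * (G.degree v : ℝ) ^ 2) (fun v _ => by positivity))
    (Finset.sum_nonneg (s := Finset.univ)
      (f := fun v => (Gᶜ.degree v : ℝ) * (Gᶜ.degree v : ℝ) ^ 2) (fun v _ => by positivity))
    (p := α / 2) (by linarith [hα.1]) (by linarith [hα.2])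
  have hN : (0 : ℝ) ≤ (Fintype.card V : ℝ) - 1 := by linarith
  have key : (Fintype.card V : ℝ) * (((Fintype.card V : ℝ) - 1) ^ 3 / 2 ^ 3) ≤
      (∑ v, (G.degree v : ℝ) * (G.degree v : ℝ) ^ 2) +
        ∑ v, (Gᶜ.degree v : ℝ) * (Gᶜ.degree v : ℝ) ^ 2 := by
    rw [← Finset.sum_add_distrib, ← nsmul_eq_mul, ← Finset.card_univ, ← Finset.sum_const]
    refine Finset.sum_le_sum fun v _ => ?_
    have hd : (G.degree v : ℝ) + Gᶜ.degree v = (Finset.univ : Finset V).card - 1 := by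
      have h := G.degree_compl v
      have h' := G.degree_lt_card_verts v
      rw [Finset.card_univ, eq_sub_iff_add_eq]
      have : G.degree v + Gᶜ.degree v + 1 = Fintype.card V := by omega
      exact_mod_cast this
    rw [← hd]
    have a0 : (0 : ℝ) ≤ G.degree v := by positivity
    have b0 : (0 : ℝ) ≤ Gᶜ.degree v := by positivity
    generalize (G.degree v : ℝ) = a at *
    generalize (Gᶜ.degree v : ℝ) = b at *
    nlinarith [mul_nonneg (add_nonneg a0 b0) (sq_nonneg (a - b)), pow_nonneg a0 3,
      pow_nonneg b0 3]
  have h4 := Real.rpow_le_rpow (by positivity) key (by linarith [hα.1] : 0 ≤ α / 2)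
  have e : (Fintype.card V : ℝ) ^ (α / 2) * ((Fintype.card V : ℝ) - 1) ^ (3 * α / 2) /
        (2 : ℝ) ^ (3 * α / 2) =
      ((Fintype.card V : ℝ) * (((Fintype.card V : ℝ) - 1) ^ 3 / 2 ^ 3)) ^ (α / 2) := by
    rw [Real.mul_rpow (by positivity) (by positivity), Real.div_rpow (by positivity) (by positivity),
      ← Real.rpow_natCast, ← Real.rpow_natCast, ← Real.rpow_mul hN, ← Real.rpow_mul (by norm_num),
      mul_div_assoc]
    congr 3 <;> push_cast <;> ring_nf
  rw [e]
  linarith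
end

section
/- Let G be a finite simple graph on n ≥ 2 vertices and let α be a real number with α < 0. Then 2^{-1+α/2} · n · (n−1)^{α+1} ≤ SO_α(G) + SO_α(G̅) < 2^{α/2} · n · (n−1), and the left equality holds if and only if G is the complete graph K_n or the empty graph on n vertices. -/
open Finset

variable {V : Type*}

lemma ng_aux_degree [Fintype V] [DecidableEq V] (G : SimpleGraph V) [DecidableRel G.Adj] (u : V) :
    G.degree u + 1 = Fintype.card V ↔ ∀ w, w ≠ u → G.Adj u w := by
  have hni : u ∉ G.neighborFinset u := by simp
  have h1 : (insert u (G.neighborFinset u)).card = G.degree u + 1 := by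
    rw [Finset.card_insert_of_notMem hni, SimpleGraph.card_neighborFinset_eq_degree]
  rw [← h1, Finset.card_eq_iff_eq_univ]
  constructor
  · intro h w hw
    have : w ∈ insert u (G.neighborFinset u) := by rw [h]; simp
    simpa [hw] using this
  · intro h
    ext w
    by_cases hw : w = u
    · simp [hw]
    · simp [hw, h w hw]

lemma ng_aux_term (α : ℝ) (hα : α < 0) (m a b : ℕ) (ha : 1 ≤ a) (hb : 1 ≤ b)
    (ham : a ≤ m) (hbm : b ≤ m) :
    (2 : ℝ) ^ (α / 2) * (m : ℝ) ^ α ≤ ((a : ℝ) ^ 2 + (b : ℝ) ^ 2) ^ (α / 2) ∧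
    ((a : ℝ) ^ 2 + (b : ℝ) ^ 2) ^ (α / 2) ≤ (2 : ℝ) ^ (α / 2) ∧
    ((2 : ℝ) ^ (α / 2) * (m : ℝ) ^ α = ((a : ℝ) ^ 2 + (b : ℝ) ^ 2) ^ (α / 2) ↔
      a = m ∧ b = m) := by
  have ha' : (1 : ℝ) ≤ a := by exact_mod_cast ha
  have hb' : (1 : ℝ) ≤ b := by exact_mod_cast hb
  have ham' : (a : ℝ) ≤ m := by exact_mod_cast ham
  have hbm' : (b : ℝ) ≤ m := by exact_mod_cast hbm
  have hm : (0 : ℝ) ≤ m := by linarith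
  have e : (2 : ℝ) ^ (α / 2) * (m : ℝ) ^ α = ((m : ℝ) ^ 2 + (m : ℝ) ^ 2) ^ (α / 2) := by
    rw [← two_mul, Real.mul_rpow (by norm_num) (by positivity), ← Real.rpow_natCast_mul hm]
    congr 2
    push_cast
    ring
  have hα2 : α / 2 < 0 := by linarith
  have hpos : (0 : ℝ) < (a : ℝ) ^ 2 + (b : ℝ) ^ 2 := by positivity
  rw [e]
  have hle : (a : ℝ) ^ 2 + (b : ℝ) ^ 2 ≤ (m : ℝ) ^ 2 + (m : ℝ) ^ 2 := by gcongr
  refine ⟨Real.rpow_le_rpow_of_nonpos hpos hle hα2.le,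
    Real.rpow_le_rpow_of_nonpos (by norm_num) (by nlinarith) hα2.le, ?_, ?_⟩
  · intro h
    have h2 : (a : ℝ) ^ 2 + (b : ℝ) ^ 2 = (m : ℝ) ^ 2 + (m : ℝ) ^ 2 := by
      by_contra hne
      exact absurd h (Real.rpow_lt_rpow_of_neg hpos (lt_of_le_of_ne hle hne) hα2).ne
    constructor
    · have : (m : ℝ) ≤ a := by nlinarith
      exact le_antisymm ham (by exact_mod_cast this)
    · have : (m : ℝ) ≤ b := by nlinarith
      exact le_antisymm hbm (by exact_mod_cast this)
  · rintro ⟨rfl, rfl⟩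
    rfl

lemma ng_aux_sum [Fintype V] [DecidableEq V] (G : SimpleGraph V) [DecidableRel G.Adj]
    (m : ℕ) (hm : Fintype.card V = m + 1) (α : ℝ) (hα : α < 0) :
    (G.edgeFinset.card : ℝ) * ((2 : ℝ) ^ (α / 2) * (m : ℝ) ^ α) ≤ generalSombor G α ∧
    generalSombor G α ≤ (G.edgeFinset.card : ℝ) * (2 : ℝ) ^ (α / 2) ∧
    ((G.edgeFinset.card : ℝ) * ((2 : ℝ) ^ (α / 2) * (m : ℝ) ^ α) = generalSombor G α ↔
      ∀ u v, G.Adj u v → ∀ w, w ≠ u → G.Adj u w) := by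
  have key : ∀ u v, G.Adj u v → _ := fun u v h =>
    ng_aux_term α hα m (G.degree u) (G.degree v)
      ((G.degree_pos_iff_exists_adj u).2 ⟨v, h⟩)
      ((G.degree_pos_iff_exists_adj v).2 ⟨u, h.symm⟩)
      (by have := G.degree_lt_card_verts u; omega)
      (by have := G.degree_lt_card_verts v; omega)
  unfold generalSombor
  rw [← nsmul_eq_mul, ← nsmul_eq_mul, ← Finset.sum_const, ← Finset.sum_const]
  have hle : ∀ e ∈ G.edgeFinset, (2 : ℝ) ^ (α / 2) * (m : ℝ) ^ α ≤
      Sym2.lift ⟨fun u v => ((G.degree u : ℝ) ^ 2 + (G.degree v : ℝ) ^ 2) ^ (α / 2),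
      fun u v => by dsimp only; rw [add_comm]⟩ e := by
    intro e
    induction e using Sym2.ind with
    | _ u v =>
      intro h
      exact (key u v (by simpa using h)).1
  refine ⟨Finset.sum_le_sum hle, Finset.sum_le_sum ?_, ?_⟩
  · intro e
    induction e using Sym2.ind with
    | _ u v =>
      intro h
      exact (key u v (by simpa using h)).2.1
  · rw [Finset.sum_eq_sum_iff_of_le hle]
    constructor
    · intro h u v huv
      have h1 := h s(u, v) (by simpa using huv)
      have h2 := ((key u v huv).2.2.1 h1).1
      exact (ng_aux_degree G u).1 (by omega)
    · intro h e
      induction e using Sym2.ind with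
      | _ u v =>
        intro he
        have huv : G.Adj u v := by simpa using he
        have h1 := (ng_aux_degree G u).2 (h u v huv)
        have h2 := (ng_aux_degree G v).2 (h v u huv.symm)
        exact (key u v huv).2.2.2 ⟨by omega, by omega⟩

lemma ng_aux_card [Fintype V] [DecidableEq V] (G : SimpleGraph V) [DecidableRel G.Adj] :
    G.edgeFinset.card + Gᶜ.edgeFinset.card = (Fintype.card V).choose 2 := by
  rw [← SimpleGraph.card_edgeFinset_top_eq_card_choose_two, ← Finset.card_union_of_disjoint]
  · congr 1
    ext e
    induction e using Sym2.ind with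
    | _ u v =>
      simp only [Finset.mem_union, SimpleGraph.mem_edgeFinset, SimpleGraph.mem_edgeSet,
        SimpleGraph.compl_adj, SimpleGraph.top_adj]
      have := G.ne_of_adj (a := u) (b := v)
      tauto
  · rw [SimpleGraph.disjoint_edgeFinset]
    exact disjoint_compl_right

theorem nordhaus_gaddum_of_neg [Fintype V] [DecidableEq V]
    (G : SimpleGraph V) [DecidableRel G.Adj]
    (hn : 2 ≤ Fintype.card V) (α : ℝ) (hα : α < 0) :
    ((2 : ℝ) ^ (-1 + α / 2) * (Fintype.card V : ℝ) * ((Fintype.card V : ℝ) - 1) ^ (α + 1) ≤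
        generalSombor G α + generalSombor Gᶜ α) ∧
      (generalSombor G α + generalSombor Gᶜ α <
        (2 : ℝ) ^ (α / 2) * (Fintype.card V : ℝ) * ((Fintype.card V : ℝ) - 1)) ∧
      ((2 : ℝ) ^ (-1 + α / 2) * (Fintype.card V : ℝ) * ((Fintype.card V : ℝ) - 1) ^ (α + 1) =
          generalSombor G α + generalSombor Gᶜ α ↔
        G = ⊤ ∨ G = ⊥) := by
  obtain ⟨m, hm⟩ : ∃ m, Fintype.card V = m + 1 := ⟨Fintype.card V - 1, by omega⟩
  have hm1 : 1 ≤ m := by omega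
  obtain ⟨l1, u1, e1⟩ := ng_aux_sum G m hm α hα
  obtain ⟨l2, u2, e2⟩ := ng_aux_sum Gᶜ m hm α hα
  have hc := ng_aux_card G
  have hcR : (G.edgeFinset.card : ℝ) + (Gᶜ.edgeFinset.card : ℝ) = (m + 1) * m / 2 := by
    have : ((G.edgeFinset.card + Gᶜ.edgeFinset.card : ℕ) : ℝ) = (m + 1) * m / 2 := by
      rw [hc, hm, Nat.cast_choose_two]
      push_cast
      ring
    exact_mod_cast this
  have hmpos : (0 : ℝ) < m := by exact_mod_cast hm1
  have hL : (2 : ℝ) ^ (-1 + α / 2) * (Fintype.card V : ℝ) * ((Fintype.card V : ℝ) - 1) ^ (α + 1)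
      = (G.edgeFinset.card : ℝ) * ((2 : ℝ) ^ (α / 2) * (m : ℝ) ^ α) +
        (Gᶜ.edgeFinset.card : ℝ) * ((2 : ℝ) ^ (α / 2) * (m : ℝ) ^ α) := by
    rw [← add_mul, hcR, hm]
    push_cast
    rw [add_sub_cancel_right, Real.rpow_add hmpos, Real.rpow_add (by norm_num : (0 : ℝ) < 2),
      Real.rpow_one, Real.rpow_neg_one]
    ring
  rw [hL]
  refine ⟨add_le_add l1 l2, ?_, ?_⟩
  · have h2 : (0 : ℝ) < (2 : ℝ) ^ (α / 2) := by positivity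
    refine lt_of_le_of_lt (add_le_add u1 u2) ?_
    rw [← add_mul, hcR, hm]
    push_cast
    have : 0 < (2 : ℝ) ^ (α / 2) * ((m + 1) * m) := by positivity
    nlinarith
  · rw [add_eq_add_iff_eq_and_eq l1 l2, e1, e2]
    constructor
    · rintro ⟨h1, h2⟩
      by_contra hne
      push Not at hne
      obtain ⟨hT, hB⟩ := hne
      obtain ⟨u, v, huv⟩ := SimpleGraph.ne_bot_iff_exists_adj.1 hB
      have hT' : Gᶜ ≠ ⊥ := fun h => hT (compl_eq_bot.1 h)
      obtain ⟨x, y, hxy⟩ := SimpleGraph.ne_bot_iff_exists_adj.1 hT'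
      by_cases hux : x = u
      · subst hux
        exact ((SimpleGraph.compl_adj _ _ _).1 hxy).2 (h1 x v huv y hxy.ne.symm)
      · have a1 := h1 u v huv x hux
        have a2 := h2 x y hxy u (Ne.symm hux)
        exact ((SimpleGraph.compl_adj _ _ _).1 a2).2 a1.symm
    · have aux : ∀ H : SimpleGraph V, H = ⊤ ∨ H = ⊥ →
          ∀ u v, H.Adj u v → ∀ w, w ≠ u → H.Adj u w := by
        rintro H (rfl | rfl) u v h w hw
        · exact hw.symm
        · exact h.elim
      intro h
      refine ⟨aux G h, aux Gᶜ ?_⟩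
      rcases h with h | h
      · exact Or.inr (compl_eq_bot.2 h)
      · exact Or.inl (compl_eq_top.2 h)
end

section
/- Let G be a finite simple graph with minimum degree δ ≥ 1 and maximum degree Δ. Then (√2/Δ) · M_2(G) ≤ SO(G) ≤ (√2/δ) · M_2(G), and both equalities hold if G is regular. -/
open Finset

variable {V : Type*}

/-- The Sombor index `SO(G) = ∑_{uv ∈ E(G)} √(d(u)^2 + d(v)^2)`. -/
noncomputable def somborIndex [Fintype V] [DecidableEq V] (G : SimpleGraph V)
    [DecidableRel G.Adj] : ℝ :=
  ∑ e ∈ G.edgeFinset,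
    Sym2.lift ⟨fun u v => Real.sqrt ((G.degree u : ℝ) ^ 2 + (G.degree v : ℝ) ^ 2),
      fun u v => by dsimp only; rw [add_comm]⟩ e

/-- The second Zagreb index `M₂(G) = ∑_{uv ∈ E(G)} d(u)·d(v)`. -/
noncomputable def secondZagreb [Fintype V] [DecidableEq V] (G : SimpleGraph V)
    [DecidableRel G.Adj] : ℝ :=
  ∑ e ∈ G.edgeFinset,
    Sym2.lift ⟨fun u v => (G.degree u : ℝ) * (G.degree v : ℝ),
      fun u v => by dsimp only; rw [mul_comm]⟩ e

theorem sombor_between_secondZagreb [Fintype V] [DecidableEq V]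
    (G : SimpleGraph V) [DecidableRel G.Adj]
    (hδ : 1 ≤ G.minDegree) :
    (Real.sqrt 2 / (G.maxDegree : ℝ) * secondZagreb G ≤ somborIndex G ∧
      somborIndex G ≤ Real.sqrt 2 / (G.minDegree : ℝ) * secondZagreb G) ∧
      ((∃ k : ℕ, G.IsRegularOfDegree k) →
        Real.sqrt 2 / (G.maxDegree : ℝ) * secondZagreb G = somborIndex G ∧
          somborIndex G = Real.sqrt 2 / (G.minDegree : ℝ) * secondZagreb G) := by
  have hV : Nonempty V := by
    by_contra h
    rw [not_nonempty_iff] at h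
    have : G.minDegree = 0 := by simp [SimpleGraph.minDegree]
    omega
  have hd : (0 : ℝ) < (G.minDegree : ℝ) := by exact_mod_cast hδ
  have hmin : ∀ v, (G.minDegree : ℝ) ≤ (G.degree v : ℝ) := fun v => by
    exact_mod_cast G.minDegree_le_degree v
  have hmax : ∀ v, (G.degree v : ℝ) ≤ (G.maxDegree : ℝ) := fun v => by
    exact_mod_cast G.degree_le_maxDegree v
  have hD : (0 : ℝ) < (G.maxDegree : ℝ) := by
    obtain ⟨v⟩ := hV
    linarith [hmin v, hmax v]
  have h1 : Real.sqrt 2 / (G.maxDegree : ℝ) * secondZagreb G ≤ somborIndex G := by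
    unfold secondZagreb somborIndex
    rw [Finset.mul_sum]
    apply Finset.sum_le_sum
    intro e _
    induction e using Sym2.ind with
    | _ u v =>
      simp only [Sym2.lift_mk]
      apply Real.le_sqrt_of_sq_le
      have ha := hmax u
      have hb := hmax v
      have ha0 : (0 : ℝ) ≤ G.degree u := Nat.cast_nonneg _
      have hb0 : (0 : ℝ) ≤ G.degree v := Nat.cast_nonneg _
      rw [mul_pow, div_pow, Real.sq_sqrt (by norm_num), div_mul_eq_mul_div,
        div_le_iff₀ (by positivity), mul_pow]
      have ha2 := mul_le_mul_of_nonneg_left (pow_le_pow_left₀ ha0 ha 2) (sq_nonneg (G.degree v : ℝ))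
      have hb2 := mul_le_mul_of_nonneg_left (pow_le_pow_left₀ hb0 hb 2) (sq_nonneg (G.degree u : ℝ))
      linarith
  have h2 : somborIndex G ≤ Real.sqrt 2 / (G.minDegree : ℝ) * secondZagreb G := by
    unfold secondZagreb somborIndex
    rw [Finset.mul_sum]
    apply Finset.sum_le_sum
    intro e _
    induction e using Sym2.ind with
    | _ u v =>
      simp only [Sym2.lift_mk]
      have ha := hmin u
      have hb := hmin v
      rw [Real.sqrt_le_left (by positivity)]
      rw [mul_pow, div_pow, Real.sq_sqrt (by norm_num), div_mul_eq_mul_div,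
        le_div_iff₀ (by positivity), mul_pow]
      have ha2 := mul_le_mul_of_nonneg_left (pow_le_pow_left₀ hd.le ha 2) (sq_nonneg (G.degree v : ℝ))
      have hb2 := mul_le_mul_of_nonneg_left (pow_le_pow_left₀ hd.le hb 2) (sq_nonneg (G.degree u : ℝ))
      linarith
  refine ⟨⟨h1, h2⟩, ?_⟩
  rintro ⟨k, hk⟩
  have heq : G.minDegree = G.maxDegree := by
    obtain ⟨v, hv⟩ := G.exists_minimal_degree_vertex
    obtain ⟨w, hw⟩ := G.exists_maximal_degree_vertex
    rw [hv, hw, hk v, hk w]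
  rw [heq] at h2 ⊢
  exact ⟨le_antisymm h1 h2, le_antisymm h2 h1⟩
end

section
/- Let G be a finite simple graph with m edges and maximum degree Δ. Then M_1(G)/√2 ≤ SO(G) ≤ √(m · Δ · M_1(G)), and the left equality holds if G is regular. -/
open Finset

variable {V : Type*}

/-- The first Zagreb index `M₁(G) = ∑_{u ∈ V(G)} d(u)^2`. -/
noncomputable def firstZagreb [Fintype V] (G : SimpleGraph V)
    [DecidableRel G.Adj] : ℝ :=
  ∑ v : V, (G.degree v : ℝ) ^ 2

theorem firstZagreb_eq_edges [Fintype V] [DecidableEq V]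
    (G : SimpleGraph V) [DecidableRel G.Adj] :
    firstZagreb G = ∑ e ∈ G.edgeFinset, ∑ v : V, if v ∈ e then (G.degree v : ℝ) else 0 := by
  rw [Finset.sum_comm]
  unfold firstZagreb
  refine Finset.sum_congr rfl fun v _ => ?_
  rw [← Finset.sum_filter, Finset.sum_const, ← SimpleGraph.incidenceFinset_eq_filter,
    SimpleGraph.card_incidenceFinset_eq_degree, nsmul_eq_mul, sq]

theorem edge_sum_eq [Fintype V] [DecidableEq V] (f : V → ℝ) (u v : V) (h : u ≠ v) :
    (∑ w : V, if w ∈ s(u, v) then f w else 0) = f u + f v := by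
  rw [← Finset.sum_filter, ← Finset.sum_pair h]
  congr 1
  ext w
  simp

theorem sombor_between_firstZagreb [Fintype V] [DecidableEq V]
    (G : SimpleGraph V) [DecidableRel G.Adj] :
    (firstZagreb G / Real.sqrt 2 ≤ somborIndex G ∧
      somborIndex G ≤
        Real.sqrt ((G.edgeFinset.card : ℝ) * (G.maxDegree : ℝ) * firstZagreb G)) ∧
      ((∃ k : ℕ, G.IsRegularOfDegree k) →
        firstZagreb G / Real.sqrt 2 = somborIndex G) := by
  have key : ∀ e ∈ G.edgeFinset, ∃ u v : V, e = s(u, v) ∧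
      (∑ w : V, if w ∈ e then (G.degree w : ℝ) else 0) = (G.degree u : ℝ) + G.degree v := by
    intro e he
    induction e using Sym2.ind with
    | _ u v =>
      refine ⟨u, v, rfl, edge_sum_eq _ u v ?_⟩
      rw [SimpleGraph.mem_edgeFinset, SimpleGraph.mem_edgeSet] at he
      exact he.ne
  have h2 : (0 : ℝ) < Real.sqrt 2 := by positivity
  have h22 : Real.sqrt 2 ^ 2 = 2 := Real.sq_sqrt (by norm_num)
  refine ⟨⟨?_, ?_⟩, ?_⟩
  · rw [firstZagreb_eq_edges, Finset.sum_div]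
    unfold somborIndex
    refine Finset.sum_le_sum fun e he => ?_
    obtain ⟨u, v, rfl, h⟩ := key e he
    rw [h, Sym2.lift_mk]
    apply Real.le_sqrt_of_sq_le
    rw [div_pow, h22]
    nlinarith [sq_nonneg ((G.degree u : ℝ) - G.degree v)]
  · apply Real.le_sqrt_of_sq_le
    unfold somborIndex
    refine sq_sum_le_card_mul_sum_sq.trans ?_
    rw [mul_assoc]
    refine mul_le_mul_of_nonneg_left ?_ (Nat.cast_nonneg _)
    rw [firstZagreb_eq_edges, Finset.mul_sum]
    refine Finset.sum_le_sum fun e he => ?_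
    obtain ⟨u, v, rfl, h⟩ := key e he
    rw [h, Sym2.lift_mk]
    dsimp only
    rw [Real.sq_sqrt (by positivity)]
    have hu : (G.degree u : ℝ) ≤ G.maxDegree := by exact_mod_cast G.degree_le_maxDegree u
    have hv : (G.degree v : ℝ) ≤ G.maxDegree := by exact_mod_cast G.degree_le_maxDegree v
    have hu0 : (0 : ℝ) ≤ G.degree u := Nat.cast_nonneg _
    have hv0 : (0 : ℝ) ≤ G.degree v := Nat.cast_nonneg _
    nlinarith [mul_le_mul_of_nonneg_right hu hu0, mul_le_mul_of_nonneg_right hv hv0]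
  · rintro ⟨k, hk⟩
    rw [firstZagreb_eq_edges, Finset.sum_div]
    unfold somborIndex
    refine Finset.sum_congr rfl fun e he => ?_
    obtain ⟨u, v, rfl, h⟩ := key e he
    rw [h, Sym2.lift_mk]
    dsimp only
    rw [hk u, hk v]
    symm
    rw [Real.sqrt_eq_iff_eq_sq (by positivity) (by positivity), div_pow, h22]
    ring
end
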